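/- Fix a sample S = (s_1,…,s_m) and let δ ∈ (0,1). Let σ be an n×m random matrix whose entries are independent uniform Rademacher (±1) random variables. With probability at least 1 − δ over σ, R̂(F,S) ≤ R̂ⁿ_m(F,S,σ) + 2 ẑ(S) ln(1/δ)/(n m) + sqrt( ( 2 ẑ(S) ln(1/δ)/(n m) )² + 4 ẑ(S) ( R̂ⁿ_m(F,S,σ) + ν̂_F(S) ) ln(1/δ)/(n m) ). -/

import Mathlib

/-!
The bound is the lower-tail inequality for self-bounding functions, obtained by the entropy
method on the cube.

For one row `x` of signs let `ρ(x) = sup_l Σ_k x_k f_l(s_k)`, let `T = m ν̂`, and put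
`W = (ρ + T) / (2ẑ)`. Let `V_i` be the minimum of `W` over the sign `x_i`. Flipping `x_i` costs a
near-maximizer `f_l` at most `|f_l(s_i)| + x_i f_l(s_i)`, hence `0 ≤ W - V_i ≤ 1` and
`Σ_i (W - V_i) ≤ W` (`rowSup_sub_rowInf_le`, `sum_rowSup_sub_rowInf_le`).

Subadditivity of entropy (`cube_entropy_le`), applied to `exp (tW)` for `t < 0`, turns this into a
differential inequality for `log E[exp (tW)]`, which integrates to
`E[exp (tW)] ≤ exp (E[W] (exp t - 1))` (`cube_mgf_le`). Chernoff's bound for `n` independent rows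
gives `Σ_j W(σ_j) > v - √(2 v ln(1/δ))` with probability at least `1 - δ`, where `v = n E[W]`
(`cube_lower_tail`). In the original variables this reads
`R̂ - R̂ⁿ ≤ √(4 ẑ (R̂ + ν̂) ln(1/δ) / (nm))`, a quadratic inequality in `R̂` whose solution is the
claim (`le_of_sub_le_sqrt`).
-/

open MeasureTheory

noncomputable section

/-- Map a Boolean to a `±1` sign: `true ↦ 1`, `false ↦ -1`. -/
def sgnB (x : Bool) : ℝ := if x then 1 else -1

/-- The `n`-Monte-Carlo Empirical Rademacher Average
`R̂ⁿ_m(F,S,σ) = (1/n) Σ_j sup_{f∈F} (1/m) Σ_i σ_{j,i} f(s_i)`. -/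
def mcera {X ι : Type*} (f : ι → X → ℝ) (n m : ℕ) (S : Fin m → X)
    (σ : Fin n → Fin m → Bool) : ℝ :=
  (n : ℝ)⁻¹ * ∑ j : Fin n, ⨆ l : ι, (m : ℝ)⁻¹ * ∑ k : Fin m, sgnB (σ j k) * f l (S k)

/-- Uniform measure on `n × m` sign matrices: the entries are independent
uniform Rademacher (±1) random variables. -/
def radMeasure (n m : ℕ) : Measure (Fin n → Fin m → Bool) :=
  (PMF.uniformOfFintype (Fin n → Fin m → Bool)).toMeasure

/-- The Empirical Rademacher Average `R̂(F,S) = E_σ[R̂ⁿ_m(F,S,σ)]`. -/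
def era {X ι : Type*} (f : ι → X → ℝ) (n m : ℕ) (S : Fin m → X) : ℝ :=
  ∫ σ, mcera f n m S σ ∂(radMeasure n m)

/-- The Rademacher Complexity `R(F,m) = E_S[R̂(F,S)]`, `S` being `m` i.i.d. samples. -/
def rc {X ι : Type*} [MeasurableSpace X] (f : ι → X → ℝ) (n m : ℕ) (μ : Measure X) : ℝ :=
  ∫ S : Fin m → X, era f n m S ∂(Measure.pi fun _ : Fin m => μ)

/-- `ẑ(S) = sup_{f∈F, 1≤i≤m} |f(s_i)|`. -/
def zhat {X ι : Type*} (f : ι → X → ℝ) {m : ℕ} (S : Fin m → X) : ℝ :=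
  ⨆ p : ι × Fin m, |f p.1 (S p.2)|

/-- `ν̂_F(S) = (1/m) sup_{f∈F} Σ_i |f(s_i)|`. -/
def nuhat {X ι : Type*} (f : ι → X → ℝ) {m : ℕ} (S : Fin m → X) : ℝ :=
  (m : ℝ)⁻¹ * ⨆ l : ι, ∑ k : Fin m, |f l (S k)|

/-- The empirical wimpy variance `σ̂²_F(S) = (1/m) sup_{f∈F} Σ_i f(s_i)²`. -/
def sigma2hat {X ι : Type*} (f : ι → X → ℝ) {m : ℕ} (S : Fin m → X) : ℝ :=
  (m : ℝ)⁻¹ * ⨆ l : ι, ∑ k : Fin m, (f l (S k)) ^ 2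

/-- The wimpy variance `σ²_F = sup_{f∈F} E_μ[f²]`. -/
def wimpyVar {X ι : Type*} [MeasurableSpace X] (f : ι → X → ℝ) (μ : Measure X) : ℝ :=
  ⨆ l : ι, ∫ x, (f l x) ^ 2 ∂μ

/-- The positive supremum deviation `SD⁺(F,S) = sup_{f∈F} ((1/m)Σ_i f(s_i) - E_μ[f])`. -/
def sdPlus {X ι : Type*} [MeasurableSpace X] (f : ι → X → ℝ) (μ : Measure X)
    {m : ℕ} (S : Fin m → X) : ℝ :=
  ⨆ l : ι, ((m : ℝ)⁻¹ * ∑ k : Fin m, f l (S k) - ∫ x, f l x ∂μ)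

/-- The negative supremum deviation `SD⁻(F,S) = sup_{f∈F} (E_μ[f] - (1/m)Σ_i f(s_i))`. -/
def sdMinus {X ι : Type*} [MeasurableSpace X] (f : ι → X → ℝ) (μ : Measure X)
    {m : ℕ} (S : Fin m → X) : ℝ :=
  ⨆ l : ι, ((∫ x, f l x ∂μ) - (m : ℝ)⁻¹ * ∑ k : Fin m, f l (S k))

/-- `η_F = sup_{f∈F} E_μ[f] - a`. -/
def etaF {X ι : Type*} [MeasurableSpace X] (f : ι → X → ℝ) (μ : Measure X) (a : ℝ) : ℝ :=
  (⨆ l : ι, ∫ x, f l x ∂μ) - a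

/-- `γ_F = b - inf_{f∈F} E_μ[f]`. -/
def gammaF {X ι : Type*} [MeasurableSpace X] (f : ι → X → ℝ) (μ : Measure X) (b : ℝ) : ℝ :=
  b - ⨅ l : ι, ∫ x, f l x ∂μ

/-- `η̂_F(S) = sup_{f∈F} (1/m) Σ_i f(s_i) - a`. -/
def etahat {X ι : Type*} (f : ι → X → ℝ) {m : ℕ} (S : Fin m → X) (a : ℝ) : ℝ :=
  (⨆ l : ι, (m : ℝ)⁻¹ * ∑ k : Fin m, f l (S k)) - a

/-- `γ̂_F(S) = b - sup_{f∈F} (1/m) Σ_i f(s_i)`. -/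
def gammahat {X ι : Type*} (f : ι → X → ℝ) {m : ℕ} (S : Fin m → X) (b : ℝ) : ℝ :=
  b - ⨆ l : ι, (m : ℝ)⁻¹ * ∑ k : Fin m, f l (S k)

/-- `h(x) = (1+x) ln(1+x) - x`. -/
def hfun (x : ℝ) : ℝ := (1 + x) * Real.log (1 + x) - x

/-- `g(σ) = n m R̂ⁿ_m(F,S,σ) = Σ_j sup_{f∈F} Σ_i σ_{j,i} f(s_i)`. -/
def gup {X ι : Type*} (f : ι → X → ℝ) {n m : ℕ} (S : Fin m → X)
    (σ : Fin n → Fin m → Bool) : ℝ :=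
  ∑ j : Fin n, ⨆ l : ι, ∑ k : Fin m, sgnB (σ j k) * f l (S k)

/-- `g_{j,i}(σ)`: infimum over `σ'_{j,i} ∈ {-1,1}` of `g` evaluated at `σ` with its
`(j,i)` entry replaced by `σ'_{j,i}`. -/
def gji {X ι : Type*} (f : ι → X → ℝ) {n m : ℕ} (S : Fin m → X)
    (σ : Fin n → Fin m → Bool) (j : Fin n) (i : Fin m) : ℝ :=
  min (gup f S (Function.update σ j (Function.update (σ j) i true)))
      (gup f S (Function.update σ j (Function.update (σ j) i false)))

/-- `g(S) = m SD⁺(F,S) = sup_{f∈F} (Σ_i f(s_i) - m E_μ[f])`. -/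
def gSDp {X ι : Type*} [MeasurableSpace X] (f : ι → X → ℝ) (μ : Measure X)
    {m : ℕ} (S : Fin m → X) : ℝ :=
  ⨆ l : ι, (∑ k : Fin m, f l (S k) - m * ∫ x, f l x ∂μ)

/-- `g_i(S) = inf_{s'_i ∈ X} g(s_1,…,s_{i-1},s'_i,s_{i+1},…,s_m)` for `g = m SD⁺`. -/
def gSDpi {X ι : Type*} [MeasurableSpace X] (f : ι → X → ℝ) (μ : Measure X)
    {m : ℕ} (S : Fin m → X) (i : Fin m) : ℝ :=
  ⨅ s' : X, gSDp f μ (Function.update S i s')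

/-- `g(S) = m SD⁻(F,S) = sup_{f∈F} (m E_μ[f] - Σ_i f(s_i))`. -/
def gSDm {X ι : Type*} [MeasurableSpace X] (f : ι → X → ℝ) (μ : Measure X)
    {m : ℕ} (S : Fin m → X) : ℝ :=
  ⨆ l : ι, ((m : ℝ) * (∫ x, f l x ∂μ) - ∑ k : Fin m, f l (S k))

/-- `g_i(S) = inf_{s'_i ∈ X} g(s_1,…,s_{i-1},s'_i,s_{i+1},…,s_m)` for `g = m SD⁻`. -/
def gSDmi {X ι : Type*} [MeasurableSpace X] (f : ι → X → ℝ) (μ : Measure X)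
    {m : ℕ} (S : Fin m → X) (i : Fin m) : ℝ :=
  ⨅ s' : X, gSDm f μ (Function.update S i s')

/-- `g(S) = m σ̂²_F(S) = sup_{f∈F} Σ_i f(s_i)²`. -/
def gWv {X ι : Type*} (f : ι → X → ℝ) {m : ℕ} (S : Fin m → X) : ℝ :=
  ⨆ l : ι, ∑ k : Fin m, (f l (S k)) ^ 2

/-- `g_j(S) = sup_{f∈F} Σ_{i≠j} f(s_i)²`. -/
def gWvj {X ι : Type*} (f : ι → X → ℝ) {m : ℕ} (S : Fin m → X) (j : Fin m) : ℝ :=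
  ⨆ l : ι, ∑ k ∈ Finset.univ.erase j, (f l (S k)) ^ 2

/-! ### Entropy on the cube -/

/-- Average of `h` over the cube `{±1}^d`, i.e. expectation under uniform independent signs. -/
def cubeAvg {d : ℕ} (h : (Fin d → Bool) → ℝ) : ℝ := ((2 : ℝ) ^ d)⁻¹ * ∑ x, h x

lemma cubeAvg_succ {d : ℕ} (h : (Fin (d + 1) → Bool) → ℝ) :
    cubeAvg h = (cubeAvg (fun x => h (Fin.cons true x)) +
      cubeAvg (fun x => h (Fin.cons false x))) / 2 := by
  unfold cubeAvg
  have : ∑ x, h x = ∑ x : Fin d → Bool, h (Fin.cons true x) +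
      ∑ x : Fin d → Bool, h (Fin.cons false x) := by
    rw [← (Fin.consEquiv (fun _ : Fin (d + 1) => Bool)).sum_comp h, Fintype.sum_prod_type]
    simp [Fin.consEquiv]
  rw [this, pow_succ]
  field_simp

lemma cubeAvg_add {d : ℕ} (g h : (Fin d → Bool) → ℝ) :
    cubeAvg (fun x => g x + h x) = cubeAvg g + cubeAvg h := by
  simp [cubeAvg, Finset.sum_add_distrib, mul_add]

lemma cubeAvg_mul_left {d : ℕ} (c : ℝ) (h : (Fin d → Bool) → ℝ) :
    cubeAvg (fun x => c * h x) = c * cubeAvg h := by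
  simp only [cubeAvg, ← Finset.mul_sum]; ring

lemma cubeAvg_sum {d : ℕ} {κ : Type*} (s : Finset κ) (h : κ → (Fin d → Bool) → ℝ) :
    cubeAvg (fun x => ∑ i ∈ s, h i x) = ∑ i ∈ s, cubeAvg (h i) := by
  simp only [cubeAvg, ← Finset.mul_sum]; rw [Finset.sum_comm]

lemma cubeAvg_const {d : ℕ} (c : ℝ) : cubeAvg (fun _ : Fin d → Bool => c) = c := by
  simp [cubeAvg]

lemma cubeAvg_mono {d : ℕ} {g h : (Fin d → Bool) → ℝ} (H : ∀ x, g x ≤ h x) :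
    cubeAvg g ≤ cubeAvg h := by
  unfold cubeAvg
  gcongr
  exact H _

lemma cubeAvg_pos {d : ℕ} {h : (Fin d → Bool) → ℝ} (H : ∀ x, 0 < h x) : 0 < cubeAvg h := by
  unfold cubeAvg
  have := Finset.sum_pos (fun x _ => H x) (Finset.univ_nonempty (α := Fin d → Bool))
  positivity

/-- One-coordinate step of the tensorization: the tangent-line bound `log y ≤ y - 1` at
`y = p w / (M h)`. -/
lemma cubeAvg_tangent {d : ℕ} {h w : (Fin d → Bool) → ℝ} (hh : ∀ x, 0 < h x) (hw : ∀ x, 0 < w x)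
    {p M : ℝ} (hp : 0 < p) (hM : 0 < M) :
    cubeAvg h * (Real.log p - Real.log M) + (1 - p / M) * cubeAvg w ≤
      cubeAvg (fun x => h x * Real.log (h x) - h x * Real.log (w x) - h x + w x) := by
  have e : cubeAvg h * (Real.log p - Real.log M) + (1 - p / M) * cubeAvg w =
      cubeAvg (fun x => (Real.log p - Real.log M) * h x + (1 - p / M) * w x) := by
    rw [cubeAvg_add, cubeAvg_mul_left, cubeAvg_mul_left]; ring
  rw [e]
  refine cubeAvg_mono fun x => ?_
  have h1 := hh x
  have h2 := hw x
  have key := Real.log_le_sub_one_of_pos (show 0 < p * w x / (M * h x) by positivity)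
  rw [Real.log_div (by positivity) (by positivity), Real.log_mul hp.ne' h2.ne',
    Real.log_mul hM.ne' h1.ne'] at key
  have k2 := mul_le_mul_of_nonneg_left key h1.le
  have e2 : h x * (p * w x / (M * h x) - 1) = p / M * w x - h x := by field_simp
  rw [e2] at k2
  linarith

/-- Subadditivity of entropy on the cube, combined with the variational formula: each `u i` is a
positive function not depending on coordinate `i`. -/
lemma cube_entropy_le : ∀ {d : ℕ} (h : (Fin d → Bool) → ℝ) (u : Fin d → (Fin d → Bool) → ℝ)
    (_ : ∀ x, 0 < h x) (_ : ∀ i x, 0 < u i x)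
    (_ : ∀ i x c, u i (Function.update x i c) = u i x),
    cubeAvg (fun x => h x * Real.log (h x)) - cubeAvg h * Real.log (cubeAvg h) ≤
      ∑ i, cubeAvg (fun x => h x * Real.log (h x) - h x * Real.log (u i x) - h x + u i x) := by
  intro d
  induction d with
  | zero => intro h u _ _ _; simp [cubeAvg]
  | succ d ih =>
    intro h u hh hu hinv
    have IH (c : Bool) := ih (fun x => h (Fin.cons c x)) (fun i x => u i.succ (Fin.cons c x))
      (fun x => hh _) (fun i x => hu _ _)
      (fun i x b => by rw [Fin.cons_update]; exact hinv _ _ _)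
    have It := IH true
    have If := IH false
    have hp : 0 < cubeAvg (fun x => h (Fin.cons true x)) := cubeAvg_pos fun x => hh _
    have hq : 0 < cubeAvg (fun x => h (Fin.cons false x)) := cubeAvg_pos fun x => hh _
    have hw : ∀ x : Fin d → Bool, u 0 (Fin.cons true x) = u 0 (Fin.cons false x) := by
      intro x
      rw [← hinv 0 (Fin.cons true x) false, Fin.update_cons_zero]
    have Tt := cubeAvg_tangent (fun x => hh (Fin.cons true x)) (fun x => hu 0 (Fin.cons true x))
      hp (M := cubeAvg h) (cubeAvg_pos hh)
    have Tf := cubeAvg_tangent (fun x => hh (Fin.cons false x)) (fun x => hu 0 (Fin.cons false x))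
      hq (M := cubeAvg h) (cubeAvg_pos hh)
    have hM := cubeAvg_pos hh
    rw [Fin.sum_univ_succ, cubeAvg_succ (fun x => h x * Real.log (h x)),
      cubeAvg_succ (fun x => h x * Real.log (h x) - h x * Real.log (u 0 x) - h x + u 0 x)]
    simp only [cubeAvg_succ (fun x => h x * Real.log (h x) - h x * Real.log (u (Fin.succ _) x)
      - h x + u (Fin.succ _) x)]
    rw [← Finset.sum_div, Finset.sum_add_distrib]
    have hM2 := cubeAvg_succ h
    simp only [hw] at Tt Tf ⊢
    generalize cubeAvg (fun x => h (Fin.cons true x)) = p at *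
    generalize cubeAvg (fun x => h (Fin.cons false x)) = q at *
    generalize cubeAvg h = M at *
    generalize cubeAvg (fun x => u 0 (Fin.cons false x)) = w at *
    have hc : (1 - p / M) * w + (1 - q / M) * w = 0 := by
      have : p = 2 * M - q := by linarith
      subst this; field_simp; ring
    have hML : M * Real.log M = p * Real.log M / 2 + q * Real.log M / 2 := by rw [hM2]; ring
    linarith

/-! ### Self-bounding functions -/

/-- Moment bound for self-bounding functions `W` on the cube, for negative exponents. The lower
approximation `V i` of `W` does not depend on coordinate `i`. The entropy inequality says that
`log E[exp (tW)] / (exp t - 1)` is antitone on `t < 0`, and its limit at `0` is `E[W]`. -/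
lemma cube_mgf_le {d : ℕ} (W : (Fin d → Bool) → ℝ) (V : Fin d → (Fin d → Bool) → ℝ)
    (hV : ∀ i x c, V i (Function.update x i c) = V i x)
    (h0 : ∀ i x, V i x ≤ W x) (h1 : ∀ i x, W x - V i x ≤ 1)
    (hs : ∀ x, ∑ i, (W x - V i x) ≤ W x) {t : ℝ} (ht : t < 0) :
    cubeAvg (fun x => Real.exp (t * W x)) ≤ Real.exp (cubeAvg W * (Real.exp t - 1)) := by
  set F : ℝ → ℝ := fun t => cubeAvg (fun x => Real.exp (t * W x)) with hF
  set DF : ℝ → ℝ := fun t => cubeAvg (fun x => W x * Real.exp (t * W x)) with hDF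
  have Fpos : ∀ t, 0 < F t := fun t => cubeAvg_pos fun x => Real.exp_pos _
  have hder : ∀ t, HasDerivAt F (DF t) t := by
    intro t
    simp only [hF, hDF, cubeAvg]
    refine HasDerivAt.const_mul _ (HasDerivAt.fun_sum fun x _ => ?_)
    have := ((hasDerivAt_id t).mul_const (W x)).exp
    simpa [mul_comm] using this
  have F0 : F 0 = 1 := by simp [hF, cubeAvg_const]
  have DF0 : DF 0 = cubeAvg W := by simp [hDF]
  -- the entropy inequality, as a differential inequality for `log F`
  have ode : ∀ t < 0, (1 - Real.exp (-t)) * DF t ≤ F t * Real.log (F t) := by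
    intro t ht
    have E := cube_entropy_le (fun x => Real.exp (t * W x)) (fun i x => Real.exp (t * V i x))
      (fun x => Real.exp_pos _) (fun i x => Real.exp_pos _) (fun i x c => by simp [hV])
    simp only [Real.log_exp] at E
    have B : ∑ i, cubeAvg (fun x => Real.exp (t * W x) * (t * W x) -
        Real.exp (t * W x) * (t * V i x) - Real.exp (t * W x) + Real.exp (t * V i x)) ≤
        (Real.exp (-t) + t - 1) * DF t := by
      rw [← cubeAvg_sum, hDF, ← cubeAvg_mul_left]
      refine cubeAvg_mono fun x => ?_
      have hφ : 0 ≤ Real.exp (-t) + t - 1 := by linarith [Real.add_one_le_exp (-t)]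
      calc _ ≤ ∑ i, (Real.exp (-t) + t - 1) * Real.exp (t * W x) * (W x - V i x) := by
            refine Finset.sum_le_sum fun i _ => ?_
            have y0 := sub_nonneg.2 (h0 i x)
            have y1 := h1 i x
            have e : Real.exp (t * V i x) =
                Real.exp (t * W x) * Real.exp (-t * (W x - V i x)) := by
              rw [← Real.exp_add]; congr 1; ring
            -- chord bound for `exp` on `[0, -t]`
            have cv := convexOn_exp.2 (Set.mem_univ 0) (Set.mem_univ (-t))
              (sub_nonneg.2 y1) y0 (by ring)
            simp only [smul_eq_mul, mul_zero, zero_add, Real.exp_zero, mul_one] at cv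
            rw [mul_comm _ (-t)] at cv
            have := mul_le_mul_of_nonneg_left cv (Real.exp_pos (t * W x)).le
            rw [e]
            nlinarith
        _ = (Real.exp (-t) + t - 1) * Real.exp (t * W x) * ∑ i, (W x - V i x) := by
            rw [Finset.mul_sum]
        _ ≤ (Real.exp (-t) + t - 1) * Real.exp (t * W x) * W x :=
            mul_le_mul_of_nonneg_left (hs x) (mul_nonneg hφ (Real.exp_pos _).le)
        _ = _ := by ring
    have e : cubeAvg (fun x => Real.exp (t * W x) * (t * W x)) = t * DF t := by
      rw [hDF, ← cubeAvg_mul_left]; congr 1; ext x; ring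
    rw [e] at E
    have E' : t * DF t - F t * Real.log (F t) ≤ (Real.exp (-t) + t - 1) * DF t := E.trans B
    linarith
  set r : ℝ → ℝ := fun t => Real.log (F t) / (Real.exp t - 1) with hr
  have hne : ∀ t < 0, Real.exp t - 1 ≠ 0 := fun t ht => by
    have := Real.exp_lt_exp.2 ht; rw [Real.exp_zero] at this; linarith
  have rder : ∀ t < 0, HasDerivAt r ((DF t / F t * (Real.exp t - 1) -
      Real.log (F t) * Real.exp t) / (Real.exp t - 1) ^ 2) t := fun t ht =>
    ((hder t).log (Fpos t).ne').div ((Real.hasDerivAt_exp t).sub_const 1) (hne t ht)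
  have anti : AntitoneOn r (Set.Iio 0) := by
    refine antitoneOn_of_deriv_nonpos (convex_Iio 0)
      (fun t ht => (rder t ht).continuousAt.continuousWithinAt)
      (fun t ht => ?_) (fun t ht => ?_)
    · rw [interior_Iio] at ht; exact (rder t ht).differentiableAt.differentiableWithinAt
    · rw [interior_Iio] at ht
      rw [(rder t ht).deriv]
      refine div_nonpos_of_nonpos_of_nonneg ?_ (sq_nonneg _)
      have o := ode t ht
      have hFt := Fpos t
      have : DF t / F t * (Real.exp t - 1) - Real.log (F t) * Real.exp t =
          Real.exp t / F t * ((1 - Real.exp (-t)) * DF t - F t * Real.log (F t)) := by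
        rw [Real.exp_neg]; field_simp
      rw [this]
      exact mul_nonpos_of_nonneg_of_nonpos (by positivity) (by linarith)
  have lim : Filter.Tendsto r (nhdsWithin 0 (Set.Iio 0)) (nhds (cubeAvg W)) := by
    have a1 : HasDerivAt (fun t => Real.log (F t)) (cubeAvg W) 0 := by
      have := (hder 0).log (Fpos 0).ne'
      rwa [F0, DF0, div_one] at this
    have a2 := Real.hasDerivAt_exp 0
    rw [hasDerivAt_iff_tendsto_slope] at a1 a2
    have sub : nhdsWithin (0 : ℝ) (Set.Iio 0) ≤ nhdsWithin 0 {0}ᶜ :=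
      nhdsWithin_mono _ fun x hx => by simpa using (ne_of_lt hx)
    have := (a1.mono_left sub).div (a2.mono_left sub) (by simp)
    simp only [Real.exp_zero, div_one] at this
    refine this.congr' ?_
    filter_upwards [self_mem_nhdsWithin] with s hs
    have hs' : s ≠ 0 := ne_of_lt hs
    have := hne s hs
    simp only [hr, Pi.div_apply, slope_def_field, F0, Real.log_one, Real.exp_zero, sub_zero]
    field_simp
  have hge : cubeAvg W ≤ r t := by
    refine le_of_tendsto lim ?_
    have : Set.Ioo t 0 ∈ nhdsWithin (0 : ℝ) (Set.Iio 0) := Ioo_mem_nhdsLT ht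
    filter_upwards [this] with s hs
    exact anti ht hs.2 hs.1.le
  have hneg : Real.exp t - 1 < 0 := by have := Real.exp_lt_exp.2 ht; rw [Real.exp_zero] at this; linarith
  have hL : Real.log (F t) ≤ cubeAvg W * (Real.exp t - 1) := by
    simp only [hr] at hge
    rwa [le_div_iff_of_neg hneg] at hge
  calc F t = Real.exp (Real.log (F t)) := (Real.exp_log (Fpos t)).symm
    _ ≤ _ := Real.exp_le_exp.2 hL

lemma exp_le_quadratic_of_nonpos {t : ℝ} (ht : t ≤ 0) : Real.exp t ≤ 1 + t + t ^ 2 / 2 := by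
  have h := Real.quadratic_le_exp_of_nonneg (neg_nonneg.2 ht)
  rw [Real.exp_neg] at h
  have hp : 0 < 1 + -t + (-t) ^ 2 / 2 := by nlinarith
  have h2 : Real.exp t ≤ (1 + -t + (-t) ^ 2 / 2)⁻¹ := by
    rw [le_inv_comm₀ (Real.exp_pos _) hp]; exact h
  refine h2.trans ?_
  rw [inv_le_iff_one_le_mul₀ hp]
  nlinarith [sq_nonneg (t ^ 2)]

/-- Lower tail of a sum of `n` independent copies of a self-bounding function, as a count of sign
matrices. -/
lemma cube_lower_tail {d : ℕ} (n : ℕ) (hn : 0 < n) (W : (Fin d → Bool) → ℝ)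
    (V : Fin d → (Fin d → Bool) → ℝ)
    (hV : ∀ i x c, V i (Function.update x i c) = V i x)
    (h0 : ∀ i x, V i x ≤ W x) (h1 : ∀ i x, W x - V i x ≤ 1)
    (hs : ∀ x, ∑ i, (W x - V i x) ≤ W x) (hpos : 0 < cubeAvg W) {L : ℝ} (hL : 0 < L)
    (B : Finset (Fin n → Fin d → Bool))
    (hB : ∀ σ ∈ B, ∑ j, W (σ j) ≤ n * cubeAvg W - √(2 * (n * cubeAvg W) * L)) :
    (B.card : ℝ) ≤ Real.exp (-L) * (2 ^ d) ^ n := by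
  have hn' : (0 : ℝ) < n := by exact_mod_cast hn
  set v := n * cubeAvg W with hv
  have vpos : 0 < v := by positivity
  set s := √(2 * v * L) with hs'
  have spos : 0 < s := Real.sqrt_pos.2 (by positivity)
  have s2 : s ^ 2 = 2 * v * L := Real.sq_sqrt (by positivity)
  -- the optimal exponent in Chernoff's bound
  set t := -(s / v) with ht
  have tneg : t < 0 := by rw [ht]; exact neg_lt_zero.2 (by positivity)
  have hm := cube_mgf_le W V hV h0 h1 hs tneg
  have sumeq : ∑ σ : Fin n → Fin d → Bool, Real.exp (t * ∑ j, W (σ j)) =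
      ((2 ^ d) * cubeAvg (fun x => Real.exp (t * W x))) ^ n := by
    have e1 : (2 : ℝ) ^ d * cubeAvg (fun x => Real.exp (t * W x)) =
        ∑ x, Real.exp (t * W x) := by
      unfold cubeAvg; field_simp
    rw [e1, Fintype.sum_pow]
    refine Finset.sum_congr rfl fun σ _ => ?_
    rw [Finset.mul_sum, Real.exp_sum]
  have up : ∑ σ : Fin n → Fin d → Bool, Real.exp (t * ∑ j, W (σ j)) ≤
      (2 ^ d) ^ n * Real.exp (v * (t + t ^ 2 / 2)) := by
    rw [sumeq, mul_pow]
    gcongr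
    calc cubeAvg (fun x => Real.exp (t * W x)) ^ n
        ≤ (Real.exp (cubeAvg W * (Real.exp t - 1))) ^ n :=
          pow_le_pow_left₀ (cubeAvg_pos fun x => Real.exp_pos _).le hm n
      _ = Real.exp (v * (Real.exp t - 1)) := by rw [← Real.exp_nat_mul, hv]; congr 1; ring
      _ ≤ _ := by
          gcongr
          linarith [exp_le_quadratic_of_nonpos tneg.le]
  have low : (B.card : ℝ) * Real.exp (t * (v - s)) ≤
      ∑ σ : Fin n → Fin d → Bool, Real.exp (t * ∑ j, W (σ j)) := by
    calc (B.card : ℝ) * Real.exp (t * (v - s)) = ∑ σ ∈ B, Real.exp (t * (v - s)) := by simp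
      _ ≤ ∑ σ ∈ B, Real.exp (t * ∑ j, W (σ j)) :=
          Finset.sum_le_sum fun σ hσ => Real.exp_le_exp.2
            (mul_le_mul_of_nonpos_left (hB σ hσ) tneg.le)
      _ ≤ _ := Finset.sum_le_sum_of_subset_of_nonneg (Finset.subset_univ _)
            fun _ _ _ => (Real.exp_pos _).le
  have ex : v * (t + t ^ 2 / 2) = -L + t * (v - s) := by
    have : v * (t + t ^ 2 / 2) - t * (v - s) = - (s ^ 2 / (2 * v)) := by
      rw [ht]; field_simp; ring
    have : s ^ 2 / (2 * v) = L := by rw [s2]; field_simp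
    linarith
  have fin := low.trans up
  rw [ex, Real.exp_add] at fin
  refine le_of_mul_le_mul_right ?_ (Real.exp_pos (t * (v - s)))
  linarith

/-! ### The supremum of a Rademacher process as a self-bounding function -/

/-- `sup_l Σ_k x_k g_l(k)` for a sign vector `x`. -/
def rowSup {ι : Type*} {m : ℕ} (g : ι → Fin m → ℝ) (x : Fin m → Bool) : ℝ :=
  ⨆ l, ∑ k, sgnB (x k) * g l k

section RowSup

variable {ι : Type*} {m : ℕ} {g : ι → Fin m → ℝ} {z : ℝ}

lemma abs_sgnB (c : Bool) : |sgnB c| = 1 := by cases c <;> simp [sgnB]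

lemma bdd_sum_abs (hz : ∀ l k, |g l k| ≤ z) : BddAbove (Set.range fun l => ∑ k, |g l k|) := by
  refine ⟨∑ _k : Fin m, z, ?_⟩
  rintro _ ⟨l, rfl⟩
  exact Finset.sum_le_sum fun k _ => hz l k

lemma bdd_rowSup (hz : ∀ l k, |g l k| ≤ z) (x : Fin m → Bool) :
    BddAbove (Set.range fun l => ∑ k, sgnB (x k) * g l k) := by
  refine ⟨∑ _k : Fin m, z, ?_⟩
  rintro _ ⟨l, rfl⟩
  refine Finset.sum_le_sum fun k _ => (le_abs_self _).trans ?_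
  rw [abs_mul, abs_sgnB, one_mul]
  exact hz l k

lemma sum_sgnB_update (h : Fin m → ℝ) (x : Fin m → Bool) (i : Fin m) (c : Bool) :
    ∑ k, sgnB (Function.update x i c k) * h k =
      ∑ k, sgnB (x k) * h k + (sgnB c - sgnB (x i)) * h i := by
  rw [← Finset.add_sum_erase _ _ (Finset.mem_univ i),
    ← Finset.add_sum_erase _ (fun k => sgnB (x k) * h k) (Finset.mem_univ i)]
  have : ∑ k ∈ Finset.univ.erase i, sgnB (Function.update x i c k) * h k =
      ∑ k ∈ Finset.univ.erase i, sgnB (x k) * h k :=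
    Finset.sum_congr rfl fun k hk => by
      rw [Function.update_of_ne (Finset.ne_of_mem_erase hk)]
  rw [this, Function.update_self]
  ring

/-- The smaller of the two values of `rowSup` when coordinate `i` of the sign vector varies. -/
def rowInf (g : ι → Fin m → ℝ) (i : Fin m) (x : Fin m → Bool) : ℝ :=
  min (rowSup g (Function.update x i true)) (rowSup g (Function.update x i false))

lemma rowInf_update (i : Fin m) (x : Fin m → Bool) (c : Bool) :
    rowInf g i (Function.update x i c) = rowInf g i x := by
  simp [rowInf]

lemma rowInf_le (i : Fin m) (x : Fin m → Bool) : rowInf g i x ≤ rowSup g x := by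
  unfold rowInf
  have h := Function.update_eq_self i x
  cases hx : x i
  · rw [hx] at h; rw [h]; exact min_le_right _ _
  · rw [hx] at h; rw [h]; exact min_le_left _ _

/-- Flipping coordinate `i` costs an arbitrary index `l` at most `|g_l(i)| + x_i g_l(i)`. -/
lemma sum_sub_le_rowInf (hz : ∀ l k, |g l k| ≤ z) (l : ι) (i : Fin m) (x : Fin m → Bool) :
    ∑ k, sgnB (x k) * g l k - (|g l i| + sgnB (x i) * g l i) ≤ rowInf g i x := by
  have key (c : Bool) : ∑ k, sgnB (x k) * g l k - (|g l i| + sgnB (x i) * g l i) ≤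
      rowSup g (Function.update x i c) := by
    refine le_trans ?_ (le_ciSup (bdd_rowSup hz (Function.update x i c)) l)
    rw [sum_sgnB_update]
    have : -|g l i| ≤ sgnB c * g l i := by
      have := neg_abs_le (sgnB c * g l i)
      rwa [abs_mul, abs_sgnB, one_mul] at this
    linarith
  exact le_min (key _) (key _)

lemma rowSup_sub_rowInf_le [Nonempty ι] (hz : ∀ l k, |g l k| ≤ z) (i : Fin m)
    (x : Fin m → Bool) : rowSup g x - rowInf g i x ≤ 2 * z := by
  rw [sub_le_iff_le_add]
  refine ciSup_le fun l => ?_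
  have h1 := sum_sub_le_rowInf hz l i x
  have h2 := hz l i
  have h3 := le_abs_self (sgnB (x i) * g l i)
  rw [abs_mul, abs_sgnB, one_mul] at h3
  linarith

/-- The self-bounding inequality; the supremum need not be attained, so it is approximated up
to `ε`. -/
lemma sum_rowSup_sub_rowInf_le [Nonempty ι] (hz : ∀ l k, |g l k| ≤ z) (x : Fin m → Bool) :
    ∑ i, (rowSup g x - rowInf g i x) ≤ rowSup g x + ⨆ l, ∑ k, |g l k| := by
  refine le_of_forall_pos_le_add fun ε hε => ?_
  have hε' : 0 < ε / (m + 1) := by positivity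
  obtain ⟨l, hl⟩ := exists_lt_of_lt_ciSup (sub_lt_self (rowSup g x) hε')
  calc ∑ i, (rowSup g x - rowInf g i x)
      ≤ ∑ i, (ε / (m + 1) + (|g l i| + sgnB (x i) * g l i)) :=
        Finset.sum_le_sum fun i _ => by
          have := sum_sub_le_rowInf hz l i x
          linarith
    _ = m * (ε / (m + 1)) + (∑ i, |g l i| + ∑ i, sgnB (x i) * g l i) := by
        simp [Finset.sum_add_distrib]
    _ ≤ ε + ((⨆ l, ∑ k, |g l k|) + rowSup g x) := by
        gcongr
        · rw [← mul_div_assoc, div_le_iff₀ (by positivity)]; nlinarith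
        · exact le_ciSup (bdd_sum_abs hz) l
        · exact le_ciSup (bdd_rowSup hz x) l
    _ = _ := by ring

end RowSup

/-! ### Sign matrices and the uniform measure -/

lemma cube_sum_marginal {n d : ℕ} (hn : 0 < n) (G : (Fin d → Bool) → ℝ) (j : Fin n) :
    ∑ σ : Fin n → Fin d → Bool, G (σ j) = (2 ^ d) ^ n * cubeAvg G := by
  have e : ∀ σ : Fin n → Fin d → Bool, G (σ j) = ∏ i, (if i = j then G (σ i) else 1) := by
    intro σ; simp
  simp_rw [e]
  have := Finset.prod_univ_sum (fun _ : Fin n => (Finset.univ : Finset (Fin d → Bool)))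
    (fun i x => if i = j then G x else 1)
  rw [Fintype.piFinset_univ] at this
  rw [← this, ← Finset.mul_prod_erase _ _ (Finset.mem_univ j)]
  have e2 : ∏ i ∈ Finset.univ.erase j, ∑ x : Fin d → Bool, (if i = j then G x else 1) =
      ∏ i ∈ Finset.univ.erase j, (2 : ℝ) ^ d :=
    Finset.prod_congr rfl fun i hi => by simp [Finset.ne_of_mem_erase hi]
  rw [e2, Finset.prod_const, Finset.card_erase_of_mem (Finset.mem_univ j), Finset.card_univ,
    Fintype.card_fin]
  have e3 : ((2 : ℝ) ^ d) ^ n = (2 ^ d) ^ (n - 1) * 2 ^ d := by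
    rw [← pow_succ, Nat.sub_add_cancel hn]
  rw [e3]
  simp only [if_true, cubeAvg]
  field_simp

lemma mcera_eq {X ι : Type*} (f : ι → X → ℝ) (n m : ℕ) (S : Fin m → X)
    (σ : Fin n → Fin m → Bool) :
    mcera f n m S σ = ((n : ℝ) * m)⁻¹ * ∑ j, rowSup (fun l k => f l (S k)) (σ j) := by
  unfold mcera rowSup
  simp_rw [← Real.mul_iSup_of_nonneg (inv_nonneg.2 (Nat.cast_nonneg (α := ℝ) m))]
  rw [← Finset.mul_sum, mul_inv, mul_assoc]

lemma era_eq {X ι : Type*} (f : ι → X → ℝ) (n m : ℕ) (hn : 0 < n) (S : Fin m → X) :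
    era f n m S = (m : ℝ)⁻¹ * cubeAvg (rowSup (fun l k => f l (S k))) := by
  unfold era radMeasure
  rw [PMF.integral_eq_sum]
  simp only [PMF.uniformOfFintype_apply, mcera_eq, smul_eq_mul]
  rw [← Finset.mul_sum, ← Finset.mul_sum, Finset.sum_comm]
  simp only [cube_sum_marginal hn]
  have : (n : ℝ) ≠ 0 := by positivity
  simp
  field_simp

lemma radMeasure_ge {n m : ℕ} {δ : ℝ} (A : Set (Fin n → Fin m → Bool))
    (B : Finset (Fin n → Fin m → Bool)) (hAB : ∀ σ, σ ∉ B → σ ∈ A)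
    (hB : (B.card : ℝ) ≤ δ * (2 ^ m) ^ n) : 1 - δ ≤ (radMeasure n m A).toReal := by
  classical
  unfold radMeasure
  rw [PMF.toMeasure_uniformOfFintype_apply _ A.toFinite.measurableSet]
  have hc : Fintype.card (Fin n → Fin m → Bool) = (2 ^ m) ^ n := by simp
  have h1 : (2 ^ m) ^ n ≤ Fintype.card A + B.card := by
    rw [← hc, ← Finset.card_univ, ← Set.toFinset_card]
    refine (Finset.card_le_card fun σ _ => ?_).trans (Finset.card_union_le _ _)
    by_cases h : σ ∈ B
    · simp [h]
    · simp [hAB σ h]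
  have h2 : ((2 : ℝ) ^ m) ^ n ≤ Fintype.card A + B.card := by exact_mod_cast h1
  rw [hc, ENNReal.toReal_div]
  simp only [ENNReal.toReal_natCast]
  push_cast
  rw [le_div_iff₀ (by positivity)]
  linarith

/-- Solving the quadratic inequality `(E - R)² ≤ 2A(E + N)` for `E`. -/
lemma le_of_sub_le_sqrt {A E R N : ℝ} (hA : 0 ≤ A) (hE : 0 ≤ E + N)
    (h : E - R ≤ √(2 * A * (E + N))) : E ≤ R + A + √(A ^ 2 + 2 * A * (R + N)) := by
  rcases le_total (E - R) A with h1 | h1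
  · linarith [Real.sqrt_nonneg (A ^ 2 + 2 * A * (R + N))]
  · have h2 : (E - R) ^ 2 ≤ 2 * A * (E + N) := by
      rw [← Real.sq_sqrt (show 0 ≤ 2 * A * (E + N) by positivity)]
      exact pow_le_pow_left₀ (hA.trans h1) h 2
    have : E - R - A ≤ √(A ^ 2 + 2 * A * (R + N)) := by
      apply Real.le_sqrt_of_sq_le
      nlinarith
    linarith

/-! ### The Monte-Carlo bound -/

theorem stmt_7 {X : Type*} [MeasurableSpace X] {ι : Type*} [Countable ι]
    (f : ι → X → ℝ) (a b : ℝ) (ha : a ≤ 0) (hb : 0 < b)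
    (hmeas : ∀ l : ι, Measurable (f l))
    (hrange : ∀ (l : ι) (x : X), f l x ∈ Set.Icc a b)
    (hzero : ∃ l₀ : ι, ∀ x : X, f l₀ x = 0)
    (n m : ℕ) (hn : 0 < n) (hm : 0 < m) (S : Fin m → X)
    (δ : ℝ) (hδ : δ ∈ Set.Ioo (0 : ℝ) 1) :
    1 - δ ≤ (radMeasure n m
        {σ : Fin n → Fin m → Bool | era f n m S ≤ mcera f n m S σ +
          2 * zhat f S * Real.log (1 / δ) / ((n : ℝ) * (m : ℝ)) +
          Real.sqrt ((2 * zhat f S * Real.log (1 / δ) / ((n : ℝ) * (m : ℝ))) ^ 2 +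
            4 * zhat f S * (mcera f n m S σ + nuhat f S) * Real.log (1 / δ) /
              ((n : ℝ) * (m : ℝ)))}).toReal := by
  classical
  obtain ⟨l₀, hl₀⟩ := hzero
  have : Nonempty ι := ⟨l₀⟩
  have hn' : (0 : ℝ) < n := by exact_mod_cast hn
  have hm' : (0 : ℝ) < m := by exact_mod_cast hm
  set g : ι → Fin m → ℝ := fun l k => f l (S k) with hg
  set z := zhat f S with hzdef
  set L := Real.log (1 / δ) with hLdef
  have hL : 0 < L := Real.log_pos (by rw [lt_div_iff₀ hδ.1]; linarith [hδ.2])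
  have hexpL : Real.exp (-L) = δ := by
    rw [hLdef, one_div, Real.log_inv, neg_neg, Real.exp_log hδ.1]
  have hz : ∀ l k, |g l k| ≤ z := by
    intro l k
    refine le_ciSup (f := fun p : ι × Fin m => |f p.1 (S p.2)|) ⟨max |a| |b|, ?_⟩ (l, k)
    rintro _ ⟨p, rfl⟩
    exact abs_le_max_abs_abs (hrange _ _).1 (hrange _ _).2
  have hz0 : 0 ≤ z := (abs_nonneg _).trans (hz l₀ ⟨0, hm⟩)
  have hrow0 : ∀ x, 0 ≤ rowSup g x := fun x => by
    refine le_trans (le_of_eq ?_) (le_ciSup (bdd_rowSup hz x) l₀)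
    simp [hg, hl₀]
  set T := ⨆ l, ∑ k, |g l k| with hT
  have hnu : nuhat f S = (m : ℝ)⁻¹ * T := rfl
  have hgT : ∀ l k, |g l k| ≤ T := fun l k =>
    (Finset.single_le_sum (f := fun k => |g l k|) (fun _ _ => abs_nonneg _)
      (Finset.mem_univ k)).trans (le_ciSup (bdd_sum_abs hz) l)
  have : Nonempty (Fin m) := ⟨⟨0, hm⟩⟩
  have hzT : z ≤ T := ciSup_le fun p => hgT p.1 p.2
  have hera := era_eq f n m hn S
  have hmc := mcera_eq f n m S
  rw [← hg] at hera
  simp only [← hg] at hmc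
  set G := cubeAvg (rowSup g) with hG
  have hG0 : 0 ≤ G := by
    have := cubeAvg_mono hrow0
    rwa [cubeAvg_const] at this
  rcases hz0.eq_or_lt with hz00 | hzpos
  · -- `ẑ = 0`: every `f` vanishes on the sample
    refine radMeasure_ge _ ∅ (fun σ _ => ?_) (by
      simp only [Finset.card_empty, Nat.cast_zero]; have := hδ.1; positivity)
    have g0 : ∀ l k, g l k = 0 := fun l k => abs_nonpos_iff.1 ((hz l k).trans hz00.ge)
    have r0 : ∀ x, rowSup g x = 0 := fun x => by simp [rowSup, g0]
    have hG00 : G = 0 := by rw [hG, show rowSup g = fun _ => 0 from funext r0, cubeAvg_const]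
    simp [hera, hmc, r0, hG00, ← hz00]
  · set W : (Fin m → Bool) → ℝ := fun x => (2 * z)⁻¹ * (rowSup g x + T) with hW
    set V : Fin m → (Fin m → Bool) → ℝ := fun i x => (2 * z)⁻¹ * (rowInf g i x + T) with hV
    have avgW : cubeAvg W = (2 * z)⁻¹ * (G + T) := by
      rw [hW, cubeAvg_mul_left, cubeAvg_add, cubeAvg_const]
    have hTpos : 0 < T := hzpos.trans_le hzT
    have sub : ∀ i x, W x - V i x = (2 * z)⁻¹ * (rowSup g x - rowInf g i x) := fun i x => by
      simp only [hW, hV]; ring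
    set B : Finset (Fin n → Fin m → Bool) := Finset.univ.filter fun σ =>
      ∑ j, W (σ j) ≤ n * cubeAvg W - √(2 * (n * cubeAvg W) * L) with hBdef
    have hB := cube_lower_tail n hn W V
      (fun i x c => by simp only [hV, rowInf_update])
      (fun i x => by
        simp only [hW, hV]
        gcongr
        exact rowInf_le i x)
      (fun i x => by
        rw [sub, inv_mul_le_iff₀ (by positivity), mul_one]
        exact rowSup_sub_rowInf_le hz i x)
      (fun x => by
        simp only [sub]
        rw [← Finset.mul_sum]
        simp only [hW]
        gcongr
        exact sum_rowSup_sub_rowInf_le hz x)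
      (by rw [avgW]; positivity) hL B (fun σ hσ => (Finset.mem_filter.1 hσ).2)
    rw [hexpL] at hB
    refine radMeasure_ge _ B (fun σ hσ => ?_) hB
    have hσ' : n * cubeAvg W - √(2 * (n * cubeAvg W) * L) < ∑ j, W (σ j) := by
      by_contra hcon
      exact hσ (Finset.mem_filter.2 ⟨Finset.mem_univ _, not_lt.1 hcon⟩)
    have sW : ∑ j, W (σ j) = (2 * z)⁻¹ * (n * m) * (mcera f n m S σ + nuhat f S) := by
      rw [hmc, hnu]
      simp only [hW]
      rw [← Finset.mul_sum, Finset.sum_add_distrib]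
      simp
      field_simp
    have vW : n * cubeAvg W = (2 * z)⁻¹ * (n * m) * (era f n m S + nuhat f S) := by
      rw [hera, hnu, avgW]; field_simp
    have hEN : 0 ≤ era f n m S + nuhat f S := by rw [hera, hnu]; positivity
    have final := le_of_sub_le_sqrt (A := 2 * z * L / (n * m)) (R := mcera f n m S σ)
      (by positivity) hEN (by
        set c := (2 * z)⁻¹ * ((n : ℝ) * m) with hc
        have cpos : 0 < c := by positivity
        rw [sW, vW] at hσ'
        have e : 2 * (2 * z * L / (n * m)) * (era f n m S + nuhat f S) =
            c⁻¹ ^ 2 * (2 * (c * (era f n m S + nuhat f S)) * L) := by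
          rw [hc]; field_simp
        rw [e, Real.sqrt_mul (by positivity), Real.sqrt_sq (by positivity), inv_mul_eq_div,
          le_div_iff₀ cpos]
        linarith)
    rw [Set.mem_ofPred_eq]
    convert final using 4
    ring
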